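/- arXiv:2212.05125 — 2 statements merged into one kernel-verified Lean document; each statement's English description precedes it below -/
import Mathlib

section
/- Let d, m ≥ 1, let σ : ℝ^d → ℝ^{d×m} be continuously differentiable, set D := σσᵀ/2 (pointwise), let ρ : ℝ^d → ℝ be continuously differentiable with ρ(x) > 0 for all x, and define b_rev := D∇log ρ + ∇·D. Then for all smooth compactly supported f, g : ℝ^d → ℝ, ∫ g(x)·(⟨b_rev(x), ∇f(x)⟩ + Σ_{i,j} D_{ij}(x) ∂_i∂_j f(x))·ρ(x) dx = −(1/2) ∫ ⟨σ(x)ᵀ∇f(x), σ(x)ᵀ∇g(x)⟩ ρ(x) dx. -/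
open MeasureTheory

/-- The `i`-th partial derivative of `f : (ι → ℝ) → ℝ` at `x`. -/
noncomputable def pd {ι : Type*} [Fintype ι] [DecidableEq ι] (i : ι)
    (f : (ι → ℝ) → ℝ) (x : ι → ℝ) : ℝ :=
  fderiv ℝ f x (Pi.single i 1)

/-!
In divergence form the weighted generator is `ρ S f = ∇·(ρ Dᵀ∇f)`: the term `D ∇log ρ` of the
drift comes from differentiating the weight, since `ρ ∇log ρ = ∇ρ`, and `∇·D` from differentiating
the matrix field. Integrating by parts against `g` leaves `-∫ ⟨∇f, D∇g⟩ ρ`, and `D = σσᵀ/2` turns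
the bilinear form into `⟨σᵀ∇f, σᵀ∇g⟩ / 2`.
-/

open Matrix

theorem transpose_mulVec_dotProduct_transpose_mulVec {m n R : Type*} [Fintype m]
    [Fintype n] [CommSemiring R] (A : Matrix m n R) (u v : m → R) :
    (Aᵀ *ᵥ u) ⬝ᵥ (Aᵀ *ᵥ v) = u ⬝ᵥ ((A * Aᵀ) *ᵥ v) := by
  rw [mulVec_transpose, ← dotProduct_mulVec, mulVec_mulVec]

section IntegrationByParts

variable {E F : Type*} [NormedAddCommGroup E] [NormedSpace ℝ E]
  [NormedAddCommGroup F] [NormedSpace ℝ F]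

theorem hasCompactSupport_smul_fderiv {u : E → ℝ} {v : E → F} (hu : Continuous u)
    (h : HasCompactSupport fun x => u x • v x) :
    HasCompactSupport fun x => u x • fderiv ℝ v x := by
  refine h.mono' fun x hx => ?_
  contrapose! hx
  rw [Function.notMem_support, smul_eq_zero, or_iff_not_imp_left]
  intro hux
  have hv : v =ᶠ[nhds x] 0 := by
    filter_upwards [notMem_tsupport_iff_eventuallyEq.1 hx, hu.continuousAt.eventually_ne hux]
      with y hy huy
    exact (smul_eq_zero.1 hy).resolve_left huy
  simpa using hv.fderiv_eq (𝕜 := ℝ)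

variable [MeasurableSpace E] [BorelSpace E] {μ : Measure E} {u v : E → ℝ}

theorem integrable_mul_fderiv_of_hasCompactSupport_mul [IsFiniteMeasureOnCompacts μ]
    (hu : Continuous u) (hv : ContDiff ℝ 1 v) (h : HasCompactSupport fun x => u x * v x) (w : E) :
    Integrable (fun x => u x * fderiv ℝ v x w) μ :=
  (hu.mul ((hv.continuous_fderiv one_ne_zero).clm_apply continuous_const)
    ).integrable_of_hasCompactSupport
    ((hasCompactSupport_smul_fderiv hu h).comp_left (g := fun L : E →L[ℝ] ℝ => L w) rfl)

theorem integral_mul_fderiv_eq_neg_of_hasCompactSupport_mul [FiniteDimensional ℝ E]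
    [μ.IsAddHaarMeasure] (hu : ContDiff ℝ 1 u) (hv : ContDiff ℝ 1 v)
    (h : HasCompactSupport fun x => u x * v x) (w : E) :
    ∫ x, u x * fderiv ℝ v x w ∂μ = -∫ x, fderiv ℝ u x w * v x ∂μ := by
  have h_comm : HasCompactSupport fun x => v x * u x := by simpa only [mul_comm] using h
  refine integral_mul_fderiv_eq_neg_fderiv_mul_of_integrable ?_
    (integrable_mul_fderiv_of_hasCompactSupport_mul hu.continuous hv h w)
    ((hu.continuous.mul hv.continuous).integrable_of_hasCompactSupport h)
    (fun x _ => hu.differentiable one_ne_zero x) (fun x _ => hv.differentiable one_ne_zero x)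
  simpa only [mul_comm] using
    integrable_mul_fderiv_of_hasCompactSupport_mul hv.continuous hu h_comm w

end IntegrationByParts

section VectorCalculus

variable {ι κ : Type*} [Fintype ι] [DecidableEq ι] [Fintype κ]

/-- The gradient `∇f`, as a coordinate vector in `ι → ℝ`. -/
noncomputable def grad (f : (ι → ℝ) → ℝ) (x : ι → ℝ) : ι → ℝ := fun i => pd i f x

/-- The divergence `∇·F` of a vector field. -/
noncomputable def divergence (F : (ι → ℝ) → ι → ℝ) (x : ι → ℝ) : ℝ :=
  ∑ j, pd j (fun y => F y j) x

/-- The divergence `(∇·A)ᵢ = ∑ⱼ ∂ⱼ Aᵢⱼ` of a matrix field, taken along its rows. -/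
noncomputable def matrixDivergence (A : (ι → ℝ) → Matrix κ ι ℝ) (x : ι → ℝ) : κ → ℝ :=
  fun i => divergence (fun y => A y i) x

variable {f g u v ρ : (ι → ℝ) → ℝ} {x : ι → ℝ}

theorem pd_mul (j : ι) (hu : DifferentiableAt ℝ u x) (hv : DifferentiableAt ℝ v x) :
    pd j (fun y => u y * v y) x = pd j u x * v x + u x * pd j v x := by
  simp only [pd, fderiv_fun_mul hu hv, _root_.add_apply, _root_.smul_apply, smul_eq_mul]
  ring

theorem pd_sum {α : Type*} (s : Finset α) (j : ι) {u : α → (ι → ℝ) → ℝ}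
    (hu : ∀ a ∈ s, DifferentiableAt ℝ (u a) x) :
    pd j (fun y => ∑ a ∈ s, u a y) x = ∑ a ∈ s, pd j (u a) x := by
  simp only [pd, fderiv_fun_sum hu, _root_.sum_apply]

theorem contDiff_pd {n : WithTop ℕ∞} (j : ι) (hf : ContDiff ℝ (n + 1) f) :
    ContDiff ℝ n (pd j f) :=
  (hf.fderiv_right le_rfl).clm_apply contDiff_const

theorem pd_comm (hf : ContDiff ℝ 2 f) (i j : ι) : pd i (pd j f) x = pd j (pd i f) x := by
  have hdf : DifferentiableAt ℝ (fderiv ℝ f) x :=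
    (hf.fderiv_right (m := 1) le_rfl).differentiable one_ne_zero x
  have pd_pd (k l : ι) : pd k (pd l f) x
      = fderiv ℝ (fderiv ℝ f) x (Pi.single k 1) (Pi.single l 1) := by
    change fderiv ℝ (fun y => fderiv ℝ f y (Pi.single l 1)) x _ = _
    simp [fderiv_clm_apply hdf (differentiableAt_const _)]
  rw [pd_pd, pd_pd]
  exact hf.contDiffAt.isSymmSndFDerivAt (by simp) _ _

theorem grad_log (hρ : DifferentiableAt ℝ ρ x) (hx : ρ x ≠ 0) :
    grad (fun y => Real.log (ρ y)) x = (ρ x)⁻¹ • grad ρ x := by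
  ext i
  simp [grad, pd, fderiv.log hρ hx]

theorem divergence_smul {F : (ι → ℝ) → ι → ℝ} (hρ : DifferentiableAt ℝ ρ x)
    (hF : ∀ j, DifferentiableAt ℝ (fun y => F y j) x) :
    divergence (fun y => ρ y • F y) x = grad ρ x ⬝ᵥ F x + ρ x * divergence F x := by
  simp only [divergence, dotProduct, grad, Pi.smul_apply, smul_eq_mul, pd_mul _ hρ (hF _),
    Finset.sum_add_distrib, Finset.mul_sum]

theorem divergence_vecMul {w : (ι → ℝ) → κ → ℝ} {A : (ι → ℝ) → Matrix κ ι ℝ}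
    (hw : ∀ i, DifferentiableAt ℝ (fun y => w y i) x)
    (hA : ∀ i j, DifferentiableAt ℝ (fun y => A y i j) x) :
    divergence (fun y => w y ᵥ* A y) x
      = matrixDivergence A x ⬝ᵥ w x + ∑ i, ∑ j, A x i j * pd j (fun y => w y i) x := by
  have pd_vecMul (j : ι) : pd j (fun y => (w y ᵥ* A y) j) x
      = ∑ i, (pd j (fun y => A y i j) x * w x i + A x i j * pd j (fun y => w y i) x) := by
    simp only [vecMul, dotProduct]
    rw [pd_sum _ _ fun i _ => (hw i).fun_mul (hA i j)]
    refine Finset.sum_congr rfl fun i _ => ?_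
    rw [pd_mul j (hw i) (hA i j)]
    ring
  simp only [divergence, matrixDivergence, dotProduct, pd_vecMul, Finset.sum_mul]
  rw [Finset.sum_comm]
  simp only [Finset.sum_add_distrib]

theorem integral_mul_divergence_eq_neg (μ : Measure (ι → ℝ)) [μ.IsAddHaarMeasure]
    {F : (ι → ℝ) → ι → ℝ} (hg : ContDiff ℝ 1 g) (hF : ∀ j, ContDiff ℝ 1 fun x => F x j)
    (h : HasCompactSupport fun x => g x • F x) :
    ∫ x, g x * divergence F x ∂μ = -∫ x, grad g x ⬝ᵥ F x ∂μ := by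
  have h_coord (j : ι) : HasCompactSupport fun x => g x * F x j :=
    h.comp_left (g := fun w : ι → ℝ => w j) rfl
  have h_coord' (j : ι) : HasCompactSupport fun x => F x j * g x := by
    simpa only [mul_comm] using h_coord j
  have h_int (j : ι) : Integrable (fun x => g x * pd j (fun y => F y j) x) μ :=
    integrable_mul_fderiv_of_hasCompactSupport_mul hg.continuous (hF j) (h_coord j) _
  have h_int' (j : ι) : Integrable (fun x => pd j g x * F x j) μ := by
    simpa only [pd, mul_comm] using
      integrable_mul_fderiv_of_hasCompactSupport_mul (hF j).continuous hg (h_coord' j) _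
  simp only [divergence, dotProduct, grad, Finset.mul_sum]
  rw [integral_finsetSum _ fun j _ => h_int j, integral_finsetSum _ fun j _ => h_int' j,
    ← Finset.sum_neg_distrib]
  exact Finset.sum_congr rfl fun j _ =>
    integral_mul_fderiv_eq_neg_of_hasCompactSupport_mul hg (hF j) (h_coord j) _

end VectorCalculus

section Generator

variable {ι κ : Type*} [Fintype ι] [DecidableEq ι] [Fintype κ]

/-- The time-reversible drift `b_rev = D ∇log ρ + ∇·D` of a diffusion with diffusion matrix `D`
and stationary density `ρ`. -/
noncomputable def reversibleDrift (D : (ι → ℝ) → Matrix ι ι ℝ) (ρ : (ι → ℝ) → ℝ)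
    (x : ι → ℝ) : ι → ℝ :=
  D x *ᵥ grad (fun y => Real.log (ρ y)) x + matrixDivergence D x

/-- The time-reversible part `S f = ⟨b_rev, ∇f⟩ + ∑ᵢⱼ Dᵢⱼ ∂ᵢ∂ⱼ f` of the generator. The matrix
field `D` is arbitrary; `S` is the symmetric part of a generator when `D` is symmetric. -/
noncomputable def reversibleGenerator (D : (ι → ℝ) → Matrix ι ι ℝ) (ρ f : (ι → ℝ) → ℝ)
    (x : ι → ℝ) : ℝ :=
  reversibleDrift D ρ x ⬝ᵥ grad f x + ∑ i, ∑ j, D x i j * pd i (pd j f) x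

variable {D : (ι → ℝ) → Matrix ι ι ℝ} {ρ f g : (ι → ℝ) → ℝ}

theorem divergence_smul_grad_vecMul {x : ι → ℝ}
    (hD : ∀ i j, DifferentiableAt ℝ (fun y => D y i j) x) (hρ : DifferentiableAt ℝ ρ x)
    (hx : ρ x ≠ 0) (hf : ContDiff ℝ 2 f) :
    divergence (fun y => ρ y • (grad f y ᵥ* D y)) x = ρ x * reversibleGenerator D ρ f x := by
  have h_grad (i : ι) : DifferentiableAt ℝ (fun y => grad f y i) x :=
    (contDiff_pd (n := 1) i hf).differentiable one_ne_zero x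
  have h_flux (j : ι) : DifferentiableAt ℝ (fun y => (grad f y ᵥ* D y) j) x :=
    DifferentiableAt.fun_sum fun i _ => (h_grad i).mul (hD i j)
  have h_weight : grad ρ x ⬝ᵥ (grad f x ᵥ* D x)
      = ρ x * (D x *ᵥ grad (fun y => Real.log (ρ y)) x ⬝ᵥ grad f x) := by
    rw [grad_log hρ hx, mulVec_smul, smul_dotProduct, smul_eq_mul, mul_inv_cancel_left₀ hx,
      dotProduct_comm, ← dotProduct_mulVec, dotProduct_comm]
  have h_hessian : ∑ i, ∑ j, D x i j * pd j (fun y => grad f y i) x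
      = ∑ i, ∑ j, D x i j * pd i (pd j f) x := by
    simp only [pd_comm hf, grad]
  rw [divergence_smul hρ h_flux, divergence_vecMul h_grad hD, h_weight, h_hessian,
    reversibleGenerator, reversibleDrift, add_dotProduct]
  ring

theorem integral_mul_reversibleGenerator (μ : Measure (ι → ℝ)) [μ.IsAddHaarMeasure]
    (hD : ∀ i j, ContDiff ℝ 1 fun x => D x i j) (hρ : ContDiff ℝ 1 ρ) (hρ_pos : ∀ x, 0 < ρ x)
    (hf : ContDiff ℝ 2 f) (hg : ContDiff ℝ 1 g) (hgf : HasCompactSupport fun x => g x * f x) :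
    ∫ x, g x * reversibleGenerator D ρ f x * ρ x ∂μ
      = -∫ x, (grad f x ⬝ᵥ (D x *ᵥ grad g x)) * ρ x ∂μ := by
  let flux := fun x => ρ x • (grad f x ᵥ* D x)
  have h_flux (j : ι) : ContDiff ℝ 1 fun x => flux x j :=
    hρ.mul (ContDiff.sum fun i _ => (contDiff_pd i hf).mul (hD i j))
  have h_supp : HasCompactSupport fun x => g x • flux x := by
    refine (hasCompactSupport_smul_fderiv hg.continuous hgf).mono fun x hx => ?_
    contrapose! hx
    rcases smul_eq_zero.1 (Function.notMem_support.1 hx) with hgx | hfx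
    · simp [hgx]
    · have : grad f x = 0 := funext fun i => by simp [grad, pd, hfx]
      simp [flux, this]
  calc ∫ x, g x * reversibleGenerator D ρ f x * ρ x ∂μ
      = ∫ x, g x * divergence flux x ∂μ := by
        congr! 2 with x
        rw [divergence_smul_grad_vecMul (fun i j => (hD i j).differentiable one_ne_zero x)
          (hρ.differentiable one_ne_zero x) (hρ_pos x).ne' hf]
        ring
    _ = -∫ x, grad g x ⬝ᵥ flux x ∂μ := integral_mul_divergence_eq_neg μ hg h_flux h_supp
    _ = -∫ x, (grad f x ⬝ᵥ (D x *ᵥ grad g x)) * ρ x ∂μ := by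
        congr! 3 with x
        rw [dotProduct_smul, smul_eq_mul, mul_comm, dotProduct_mulVec, dotProduct_comm]

theorem reversible_generator_factorisation_general {σ : (ι → ℝ) → Matrix ι κ ℝ}
    (hD : ∀ i j, ContDiff ℝ 1 fun x => D x i j)
    (hDσ : ∀ x, D x = (1 / 2 : ℝ) • (σ x * (σ x)ᵀ)) (hρ : ContDiff ℝ 1 ρ)
    (hρ_pos : ∀ x, 0 < ρ x) (hf : ContDiff ℝ 2 f) (hg : ContDiff ℝ 1 g)
    (hgf : HasCompactSupport fun x => g x * f x) :
    ∫ x, g x * reversibleGenerator D ρ f x * ρ x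
      = -(1 / 2) * ∫ x, (((σ x)ᵀ *ᵥ grad f x) ⬝ᵥ ((σ x)ᵀ *ᵥ grad g x)) * ρ x := by
  rw [integral_mul_reversibleGenerator volume hD hρ hρ_pos hf hg hgf, neg_mul,
    ← integral_const_mul]
  simp only [transpose_mulVec_dotProduct_transpose_mulVec, hDσ, smul_mulVec, dotProduct_smul,
    smul_eq_mul, mul_assoc]

end Generator

/-- **Factorisation of the time-reversible part of the generator: `S = -Σ*Σ`.**
With `D = σσᵀ/2`, `ρ > 0` of class `C¹`, and `b_rev = D ∇ log ρ + ∇·D`, for all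
test functions `f, g`:
`∫ g (⟨b_rev, ∇f⟩ + Σ_{ij} D_{ij} ∂_i∂_j f) ρ = -(1/2) ∫ ⟨σᵀ∇f, σᵀ∇g⟩ ρ`. -/
theorem reversible_generator_factorisation (d m : ℕ) (hd : 1 ≤ d) (hm : 1 ≤ m)
    (σ : (Fin d → ℝ) → Matrix (Fin d) (Fin m) ℝ)
    (hσ : ∀ i k, ContDiff ℝ 1 (fun x => σ x i k))
    (D : (Fin d → ℝ) → Matrix (Fin d) (Fin d) ℝ)
    (hDdef : ∀ x i j, D x i j = (1 / 2) * ∑ k, σ x i k * σ x j k)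
    (ρ : (Fin d → ℝ) → ℝ) (hρ : ContDiff ℝ 1 ρ) (hρpos : ∀ x, 0 < ρ x)
    (brev : (Fin d → ℝ) → (Fin d → ℝ))
    (hbrev : ∀ x i, brev x i =
      (∑ j, D x i j * pd j (fun y => Real.log (ρ y)) x) +
        ∑ j, pd j (fun y => D y i j) x)
    (f g : (Fin d → ℝ) → ℝ)
    (hf : ContDiff ℝ (⊤ : ℕ∞) f) (hfc : HasCompactSupport f)
    (hg : ContDiff ℝ (⊤ : ℕ∞) g) (hgc : HasCompactSupport g) :
    ∫ x, g x * ((∑ i, brev x i * pd i f x) + ∑ i, ∑ j, D x i j * pd i (pd j f) x) * ρ x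
      = -(1 / 2) * ∫ x, (∑ k, (∑ i, σ x i k * pd i f x) * (∑ i, σ x i k * pd i g x)) * ρ x := by
  obtain rfl : brev = reversibleDrift D ρ := funext₂ hbrev
  have hD (i j : Fin d) : ContDiff ℝ 1 fun x => D x i j := by
    simp only [hDdef]
    exact contDiff_const.mul (ContDiff.sum fun k _ => (hσ i k).mul (hσ j k))
  have hDσ (x : Fin d → ℝ) : D x = (1 / 2 : ℝ) • (σ x * (σ x)ᵀ) :=
    Matrix.ext fun i j => by simp [hDdef, mul_apply]
  exact reversible_generator_factorisation_general hD hDσ hρ hρpos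
    (contDiff_infty.1 hf 2) (contDiff_infty.1 hg 1) hgc.mul_right
end

section
/- Let d ≥ 1, let B, D, Π ∈ ℝ^{d×d} with D symmetric, Π symmetric positive definite, and define ρ : ℝ^d → ℝ by ρ(x) := exp(−xᵀΠx/2). Then ρ satisfies the stationary Fokker–Planck equation of the linear diffusion with drift b(x) = −Bx and constant diffusion matrix D, namely Σ_{i=1}^d ∂_i((Bx)_i ρ(x)) + Σ_{i,j=1}^d D_{ij} ∂_i∂_j ρ(x) = 0 for all x ∈ ℝ^d, if and only if there exists an antisymmetric matrix Q ∈ ℝ^{d×d} (Qᵀ = −Q) such that B = (D + Q)Π. -/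
/-!
For the Gaussian weight `ρ` one has `∇ρ = -ρ P x`, so the diffusion term is minus the divergence of
`ρ D P x`, and the Fokker–Planck operator evaluates to `(tr A - A x ⬝ᵥ P x) ρ` with `A = B - D P`.
This vanishes identically iff `tr A = A x ⬝ᵥ P x` for all `x`. At `x = 0` this says `tr A = 0`;
substituting `x = P⁻¹ y` then says that the quadratic form of `Q = A P⁻¹` is zero, i.e. that `Q` is
antisymmetric. Conversely `tr (Q P) = 0` when `Q` is antisymmetric and `P` is symmetric.
-/

open Matrix

section LinearAlgebra

variable {ι R : Type*} [Fintype ι] [CommRing R] [IsAddTorsionFree R]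

theorem transpose_eq_neg_iff_dotProduct_mulVec_self {Q : Matrix ι ι R} :
    Qᵀ = -Q ↔ ∀ y, y ⬝ᵥ Q *ᵥ y = 0 := by
  constructor
  · intro hQ y
    rw [← self_eq_neg]
    simpa [hQ, neg_mulVec] using (dotProduct_transpose_mulVec Q y y).symm
  · intro hQ
    classical
    ext i j
    have polarization := hQ (Pi.single i 1 + Pi.single j 1)
    have diag_i := hQ (Pi.single i 1)
    have diag_j := hQ (Pi.single j 1)
    simp only [mulVec_add, add_dotProduct, dotProduct_add, mulVec_single_one,
      single_one_dotProduct, col_apply] at polarization diag_i diag_j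
    rw [transpose_apply, neg_apply]
    linear_combination polarization - diag_i - diag_j

theorem trace_mul_eq_zero_of_transpose_eq_neg {Q P : Matrix ι ι R} (hQ : Qᵀ = -Q)
    (hP : P.IsSymm) : (Q * P).trace = 0 := by
  rw [← self_eq_neg]
  simpa [hQ, hP.eq] using (trace_transpose_mul Q P).symm

theorem forall_trace_eq_mulVec_dotProduct_mulVec_iff [DecidableEq ι] {A P : Matrix ι ι R}
    (hP : P.IsSymm) (hPu : IsUnit P) :
    (∀ x, A.trace = A *ᵥ x ⬝ᵥ P *ᵥ x) ↔ ∃ Q : Matrix ι ι R, Qᵀ = -Q ∧ A = Q * P := by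
  constructor
  · intro hA
    have hdet : IsUnit P.det := (isUnit_iff_isUnit_det P).mp hPu
    have trace_eq_zero : A.trace = 0 := by simpa using hA 0
    refine ⟨A * P⁻¹, transpose_eq_neg_iff_dotProduct_mulVec_self.mpr fun y ↦ ?_,
      (nonsing_inv_mul_cancel_right P A hdet).symm⟩
    calc y ⬝ᵥ (A * P⁻¹) *ᵥ y = A *ᵥ (P⁻¹ *ᵥ y) ⬝ᵥ P *ᵥ (P⁻¹ *ᵥ y) := by
          rw [mulVec_mulVec, mulVec_mulVec, mul_nonsing_inv P hdet, one_mulVec, dotProduct_comm]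
      _ = 0 := by rw [← hA, trace_eq_zero]
  · rintro ⟨Q, hQ, rfl⟩ x
    rw [trace_mul_eq_zero_of_transpose_eq_neg hQ hP, ← mulVec_mulVec, dotProduct_comm,
      transpose_eq_neg_iff_dotProduct_mulVec_self.mp hQ]

end LinearAlgebra

section PartialDerivatives

variable {ι κ : Type*} [Fintype ι]

theorem differentiable_mulVec_apply (M : Matrix κ ι ℝ) (k : κ) :
    Differentiable ℝ fun y ↦ (M *ᵥ y) k := by
  unfold mulVec dotProduct
  fun_prop

theorem differentiable_dotProduct_mulVec_self (P : Matrix ι ι ℝ) :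
    Differentiable ℝ fun y ↦ y ⬝ᵥ P *ᵥ y := by
  unfold mulVec dotProduct
  fun_prop

variable [DecidableEq ι] {f g : (ι → ℝ) → ℝ} {x : ι → ℝ}

theorem pd_mul_s10 (i : ι) (hf : DifferentiableAt ℝ f x) (hg : DifferentiableAt ℝ g x) :
    pd i (fun y ↦ f y * g y) x = f x * pd i g x + g x * pd i f x := by
  simp [pd, fderiv_fun_mul hf hg]

theorem pd_exp (i : ι) (hf : DifferentiableAt ℝ f x) :
    pd i (fun y ↦ Real.exp (f y)) x = Real.exp (f x) * pd i f x := by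
  simp [pd, fderiv_exp hf]

theorem pd_sum_s10 (i : ι) {s : Finset κ} {F : κ → (ι → ℝ) → ℝ}
    (hF : ∀ k ∈ s, DifferentiableAt ℝ (F k) x) :
    pd i (fun y ↦ ∑ k ∈ s, F k y) x = ∑ k ∈ s, pd i (F k) x := by
  simp [pd, fderiv_fun_sum hF]

theorem pd_const_mul (i : ι) (c : ℝ) (hf : DifferentiableAt ℝ f x) :
    pd i (fun y ↦ c * f y) x = c * pd i f x := by
  simp [pd, fderiv_const_mul hf]

theorem pd_linearMap (i : ι) (L : (ι → ℝ) →ₗ[ℝ] ℝ) (x : ι → ℝ) :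
    pd i L x = L (Pi.single i 1) := by
  rw [pd, ← L.coe_toContinuousLinearMap', ContinuousLinearMap.fderiv]

theorem pd_mulVec_apply (i : ι) (M : Matrix κ ι ℝ) (k : κ) (x : ι → ℝ) :
    pd i (fun y ↦ (M *ᵥ y) k) x = M k i :=
  (pd_linearMap i (LinearMap.proj k ∘ₗ M.mulVecLin) x).trans (by simp)

theorem pd_dotProduct_mulVec_self (i : ι) (P : Matrix ι ι ℝ) (x : ι → ℝ) :
    pd i (fun y ↦ y ⬝ᵥ P *ᵥ y) x = (x ᵥ* P) i + (P *ᵥ x) i := by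
  have pd_coord (k : ι) : pd i (fun y ↦ y k) x = (1 : Matrix ι ι ℝ) k i := by
    simpa using pd_mulVec_apply i 1 k x
  have differentiable_coord (k : ι) : DifferentiableAt ℝ (fun y : ι → ℝ ↦ y k) x := by fun_prop
  have differentiable_mulVec (k : ι) := (differentiable_mulVec_apply P k).differentiableAt (x := x)
  calc pd i (fun y ↦ ∑ k, y k * (P *ᵥ y) k) x
      = ∑ k, pd i (fun y ↦ y k * (P *ᵥ y) k) x :=
        pd_sum_s10 i fun k _ ↦ (differentiable_coord k).mul (differentiable_mulVec k)
    _ = ∑ k, (x k * P k i + (P *ᵥ x) k * (1 : Matrix ι ι ℝ) k i) := by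
        simp only [pd_mul_s10 i (differentiable_coord _) (differentiable_mulVec _), pd_coord,
          pd_mulVec_apply]
    _ = (x ᵥ* P) i + (P *ᵥ x) i := by
        simp [Finset.sum_add_distrib, vecMul, dotProduct, one_apply]

end PartialDerivatives

section Gaussian

variable {ι κ : Type*} [Fintype ι] {P : Matrix ι ι ℝ}

/-- The centred Gaussian density with precision matrix `P`, without its normalising constant. -/
noncomputable def gaussianWeight (P : Matrix ι ι ℝ) (x : ι → ℝ) : ℝ :=
  Real.exp (-(x ⬝ᵥ P *ᵥ x) / 2)

theorem gaussianWeight_ne_zero (P : Matrix ι ι ℝ) (x : ι → ℝ) : gaussianWeight P x ≠ 0 :=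
  Real.exp_ne_zero _

theorem differentiable_gaussianWeight (P : Matrix ι ι ℝ) :
    Differentiable ℝ (gaussianWeight P) := by
  have := differentiable_dotProduct_mulVec_self P
  unfold gaussianWeight
  fun_prop

variable [DecidableEq ι]

theorem pd_gaussianWeight (i : ι) (hP : P.IsSymm) (x : ι → ℝ) :
    pd i (gaussianWeight P) x = -(P *ᵥ x) i * gaussianWeight P x := by
  have hquad : DifferentiableAt ℝ (fun y ↦ y ⬝ᵥ P *ᵥ y) x :=
    (differentiable_dotProduct_mulVec_self P).differentiableAt
  have vecMul_eq : x ᵥ* P = P *ᵥ x := by rw [← mulVec_transpose, hP.eq]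
  have gaussianWeight_eq : gaussianWeight P = fun y ↦ Real.exp (-(1 / 2) * (y ⬝ᵥ P *ᵥ y)) := by
    ext y
    rw [gaussianWeight]
    ring_nf
  rw [gaussianWeight_eq, pd_exp i (hquad.const_mul _), pd_const_mul i _ hquad,
    pd_dotProduct_mulVec_self, vecMul_eq]
  ring

theorem pd_mulVec_apply_mul_gaussianWeight (i : ι) (hP : P.IsSymm) (M : Matrix κ ι ℝ) (k : κ)
    (x : ι → ℝ) :
    pd i (fun y ↦ (M *ᵥ y) k * gaussianWeight P y) x =
      (M k i - (M *ᵥ x) k * (P *ᵥ x) i) * gaussianWeight P x := by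
  rw [pd_mul_s10 i (differentiable_mulVec_apply M k).differentiableAt
    (differentiable_gaussianWeight P).differentiableAt, pd_gaussianWeight i hP, pd_mulVec_apply]
  ring

theorem sum_pd_mulVec_apply_mul_gaussianWeight (hP : P.IsSymm) (M : Matrix ι ι ℝ) (x : ι → ℝ) :
    ∑ i, pd i (fun y ↦ (M *ᵥ y) i * gaussianWeight P y) x =
      (M.trace - M *ᵥ x ⬝ᵥ P *ᵥ x) * gaussianWeight P x := by
  simp only [pd_mulVec_apply_mul_gaussianWeight _ hP, ← Finset.sum_mul, Finset.sum_sub_distrib]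
  rfl

theorem pd_pd_gaussianWeight (i j : ι) (hP : P.IsSymm) (x : ι → ℝ) :
    pd i (pd j (gaussianWeight P)) x =
      ((P *ᵥ x) j * (P *ᵥ x) i - P j i) * gaussianWeight P x := by
  have pd_eq : pd j (gaussianWeight P) = fun y ↦ (-P *ᵥ y) j * gaussianWeight P y := by
    ext y
    rw [pd_gaussianWeight j hP, neg_mulVec, Pi.neg_apply]
  rw [pd_eq, pd_mulVec_apply_mul_gaussianWeight i hP, neg_mulVec, Pi.neg_apply, neg_apply]
  ring

theorem sum_sum_mul_pd_pd_gaussianWeight (hP : P.IsSymm) (D : Matrix ι ι ℝ) (x : ι → ℝ) :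
    ∑ i, ∑ j, D i j * pd i (pd j (gaussianWeight P)) x =
      -(((D * P).trace - (D * P) *ᵥ x ⬝ᵥ P *ᵥ x) * gaussianWeight P x) := by
  have trace_eq : (D * P).trace = ∑ i, ∑ j, D i j * P j i := rfl
  have dotProduct_eq : (D * P) *ᵥ x ⬝ᵥ P *ᵥ x =
      ∑ i, ∑ j, D i j * ((P *ᵥ x) j * (P *ᵥ x) i) := by
    rw [← mulVec_mulVec]
    generalize P *ᵥ x = v
    simp only [dotProduct, mulVec, Finset.sum_mul, mul_assoc]
  rw [trace_eq, dotProduct_eq, ← neg_mul, neg_sub]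
  simp only [pd_pd_gaussianWeight _ _ hP, ← Finset.sum_sub_distrib, Finset.sum_mul, mul_sub,
    sub_mul, mul_assoc]

/-- The right-hand side of the Fokker–Planck equation `∂ₜ ρ = ∇ ⬝ (B x ρ) + ∑ᵢⱼ Dᵢⱼ ∂ᵢ ∂ⱼ ρ` of the
linear diffusion with drift `-B x` and constant diffusion matrix `D`. It vanishes identically iff
`ρ` is stationary. -/
noncomputable def linearFokkerPlanck (B D : Matrix ι ι ℝ) (ρ : (ι → ℝ) → ℝ) (x : ι → ℝ) : ℝ :=
  ∑ i, pd i (fun y ↦ (B *ᵥ y) i * ρ y) x + ∑ i, ∑ j, D i j * pd i (pd j ρ) x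

theorem linearFokkerPlanck_gaussianWeight (hP : P.IsSymm) (B D : Matrix ι ι ℝ) (x : ι → ℝ) :
    linearFokkerPlanck B D (gaussianWeight P) x =
      ((B - D * P).trace - (B - D * P) *ᵥ x ⬝ᵥ P *ᵥ x) * gaussianWeight P x := by
  rw [linearFokkerPlanck, sum_pd_mulVec_apply_mul_gaussianWeight hP,
    sum_sum_mul_pd_pd_gaussianWeight hP, trace_sub, sub_mulVec, sub_dotProduct]
  ring

theorem ou_helmholtz_decomposition_general {B D : Matrix ι ι ℝ} (hP : P.IsSymm)
    (hPu : IsUnit P) :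
    (∀ x, linearFokkerPlanck B D (gaussianWeight P) x = 0) ↔
      ∃ Q : Matrix ι ι ℝ, Qᵀ = -Q ∧ B = (D + Q) * P := by
  simp only [linearFokkerPlanck_gaussianWeight hP, mul_eq_zero, gaussianWeight_ne_zero, or_false,
    sub_eq_zero]
  rw [forall_trace_eq_mulVec_dotProduct_mulVec_iff hP hPu]
  simp only [add_mul, sub_eq_iff_eq_add']

end Gaussian

/-- **Helmholtz decomposition for the Ornstein–Uhlenbeck process.** The centred Gaussian
density `ρ(x) = exp(-xᵀΠx/2)` with symmetric positive definite precision matrix `Π`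
satisfies the stationary Fokker–Planck equation of the linear diffusion with drift
`b(x) = -Bx` and constant symmetric diffusion matrix `D` iff `B = (D + Q)Π` for some
antisymmetric matrix `Q`. -/
theorem ou_helmholtz_decomposition (d : ℕ) (hd : 1 ≤ d)
    (B D P : Matrix (Fin d) (Fin d) ℝ)
    (hD : D.IsSymm) (hP : P.PosDef)
    (ρ : (Fin d → ℝ) → ℝ)
    (hρ : ∀ x, ρ x = Real.exp (-(x ⬝ᵥ P.mulVec x) / 2)) :
    (∀ x, (∑ i, pd i (fun y => B.mulVec y i * ρ y) x)
        + (∑ i, ∑ j, D i j * pd i (pd j ρ) x) = 0)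
    ↔ ∃ Q : Matrix (Fin d) (Fin d) ℝ, Qᵀ = -Q ∧ B = (D + Q) * P := by
  obtain rfl : ρ = gaussianWeight P := funext hρ
  have hPs : P.IsSymm := (conjTranspose_eq_transpose_of_trivial P).symm.trans hP.isHermitian
  exact ou_helmholtz_decomposition_general hPs hP.isUnit
end
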